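/- For all γ₁, γ₂, γ₃, γ₄ ∈ ℂ, the operators K := (1/2)K₁, K₊ := K₂ + (1/2)K₃ − (γ₂/2 − 2γ₄)K₁², K₋ := K₂ − (1/2)K₃ − (γ₂/2 − 2γ₄)K₁² satisfy ⁅K, K₊⁆ = K₊, ⁅K, K₋⁆ = −K₋, ⁅K₋, K₊⁆ = 2(γ₁² + 2iγ₁γ₂ − 4γ₁γ₃ − 8iγ₁γ₄ + 2(γ₂ + 3iγ₃ − 8γ₄)Ĥ₄)K + 16(γ₂² + 2γ₃² − 2γ₁γ₃ − 6iγ₁γ₄ + 2iγ₂γ₃ − 8γ₂γ₄ + 4iγ₃γ₄ − 2γ₄Ĥ₄)K³ + 32(3γ₃² + 16γ₄² − 6γ₂γ₄ + 6iγ₃γ₄)K⁵ + 512γ₄²K⁷ (a seventh-order polynomial Higgs algebra), and the structure-function factorization K₊K₋ = Φ₁(Ĥ₄,K)·Φ₂(Ĥ₄,K) with ⁅Φ₁(Ĥ₄,K), Φ₂(Ĥ₄,K)⁆ = 0, where Φ₁(Ĥ₄,K) := (1/4)(Ĥ₄ − 2iγ₁K + 4γ₂K² + 8iγ₃K³ −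 16γ₄K⁴) and Φ₂(Ĥ₄,K) := Ĥ₄ + 2iγ₁(K − Id) + 4γ₂(K − Id)² − 8iγ₃(K − Id)³ − 16γ₄(K − Id)⁴. -/

import Mathlib

noncomputable section

/-- `V = ℂ[q₁,q₂]`, the polynomial ring in two variables over `ℂ`. -/
abbrev V : Type := MvPolynomial (Fin 2) ℂ

/-- `q̂₁`: multiplication by `q₁`. -/
noncomputable def q1 : Module.End ℂ V := LinearMap.mulLeft ℂ (MvPolynomial.X 0)

/-- `q̂₂`: multiplication by `q₂`. -/
noncomputable def q2 : Module.End ℂ V := LinearMap.mulLeft ℂ (MvPolynomial.X 1)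

/-- `p̂₁ = −i ∂/∂q₁`. -/
noncomputable def p1 : Module.End ℂ V :=
  (-Complex.I) • (MvPolynomial.pderiv (0 : Fin 2)).toLinearMap

/-- `p̂₂ = −i ∂/∂q₂`. -/
noncomputable def p2 : Module.End ℂ V :=
  (-Complex.I) • (MvPolynomial.pderiv (1 : Fin 2)).toLinearMap

/-- `D = q̂₁p̂₁ + q̂₂p̂₂`. -/
noncomputable def Dop : Module.End ℂ V := q1 * p1 + q2 * p2

/-- `Ĉ = q̂₁p̂₂ − q̂₂p̂₁`, the quantum angular momentum. -/
noncomputable def Cop : Module.End ℂ V := q1 * p2 - q2 * p1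

/-- `Ĥ₄ = p̂₁² + p̂₂² + γ₁D + γ₂D² + γ₃D³ + γ₄D⁴`. -/
noncomputable def H4 (γ₁ γ₂ γ₃ γ₄ : ℂ) : Module.End ℂ V :=
  p1 ^ 2 + p2 ^ 2 + γ₁ • Dop + γ₂ • Dop ^ 2 + γ₃ • Dop ^ 3 + γ₄ • Dop ^ 4

/-- `Î₄`, the fourth-order quantum symmetry of `Ĥ₄`. -/
noncomputable def I4 (γ₁ γ₂ γ₃ γ₄ : ℂ) : Module.End ℂ V :=
  p2 ^ 2 + γ₁ • (q2 * p2) + γ₂ • ((q1 ^ 2 + q2 ^ 2) * p2 ^ 2 - Cop ^ 2)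
    + γ₃ • (q2 ^ 3 * (p2 ^ 3 - p1 ^ 2 * p2) + (q1 ^ 3 + 3 * (q1 * q2 ^ 2)) * (p1 * p2 ^ 2)
        - (3 * Complex.I) • (q2 ^ 2 * p2 ^ 2) - (3 * Complex.I) • (q1 * q2 * p1 * p2)
        - q2 * p2)
    + γ₄ • ((q2 ^ 4 - q1 ^ 4) * (p2 ^ 4 - p1 ^ 2 * p2 ^ 2)
        + 4 * ((q1 ^ 3 * q2 + q1 * q2 ^ 3) * (p1 * p2 ^ 3))
        - (6 * Complex.I) • ((q2 ^ 3 + q1 ^ 2 * q2) * p2 ^ 3)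
        - (6 * Complex.I) • ((q1 ^ 3 + q1 * q2 ^ 2) * (p1 * p2 ^ 2))
        - 4 * ((q1 ^ 2 + q2 ^ 2) * p2 ^ 2) + 4 * Cop ^ 2)

/-- `Î₄′`, the fourth-order quantum symmetry of `Ĥ₄`. -/
noncomputable def I4' (γ₁ γ₂ γ₃ γ₄ : ℂ) : Module.End ℂ V :=
  p1 ^ 2 + γ₁ • (q1 * p1) + γ₂ • ((q1 ^ 2 + q2 ^ 2) * p1 ^ 2)
    + γ₃ • (q1 ^ 3 * (p1 ^ 3 - p1 * p2 ^ 2) + (q2 ^ 3 + 3 * (q1 ^ 2 * q2)) * (p1 ^ 2 * p2)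
        - (3 * Complex.I) • (q1 ^ 2 * p1 ^ 2) - (3 * Complex.I) • (q1 * q2 * p1 * p2)
        - q1 * p1)
    + γ₄ • ((q1 ^ 4 - q2 ^ 4) * (p1 ^ 4 - p1 ^ 2 * p2 ^ 2)
        + 4 * ((q1 * q2 ^ 3 + q1 ^ 3 * q2) * (p1 ^ 3 * p2))
        - (6 * Complex.I) • ((q1 ^ 3 + q1 * q2 ^ 2) * p1 ^ 3)
        - (6 * Complex.I) • ((q2 ^ 3 + q1 ^ 2 * q2) * (p1 ^ 2 * p2))
        - 4 * ((q1 ^ 2 + q2 ^ 2) * p1 ^ 2))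

/-- `K₁ = Ĉ`. -/
noncomputable def K1 : Module.End ℂ V := Cop

/-- `K₂ = (1/2)(Î₄′ − Î₄)`. -/
noncomputable def K2 (γ₁ γ₂ γ₃ γ₄ : ℂ) : Module.End ℂ V :=
  ((1 : ℂ)/2) • (I4' γ₁ γ₂ γ₃ γ₄ - I4 γ₁ γ₂ γ₃ γ₄)

/-- `K₃ = ⁅K₁, K₂⁆`. -/
noncomputable def K3 (γ₁ γ₂ γ₃ γ₄ : ℂ) : Module.End ℂ V :=
  K1 * K2 γ₁ γ₂ γ₃ γ₄ - K2 γ₁ γ₂ γ₃ γ₄ * K1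

/-- The number operator `K = (1/2)K₁`. -/
noncomputable def Kop : Module.End ℂ V := ((1 : ℂ)/2) • K1

/-- The raising operator `K₊ = K₂ + (1/2)K₃ − (γ₂/2 − 2γ₄)K₁²`. -/
noncomputable def Kplus (γ₁ γ₂ γ₃ γ₄ : ℂ) : Module.End ℂ V :=
  K2 γ₁ γ₂ γ₃ γ₄ + ((1 : ℂ)/2) • K3 γ₁ γ₂ γ₃ γ₄ - (γ₂/2 - 2*γ₄) • K1 ^ 2

/-- The lowering operator `K₋ = K₂ − (1/2)K₃ − (γ₂/2 − 2γ₄)K₁²`. -/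
noncomputable def Kminus (γ₁ γ₂ γ₃ γ₄ : ℂ) : Module.End ℂ V :=
  K2 γ₁ γ₂ γ₃ γ₄ - ((1 : ℂ)/2) • K3 γ₁ γ₂ γ₃ γ₄ - (γ₂/2 - 2*γ₄) • K1 ^ 2

/-- `Φ₁(Ĥ₄,K) = (1/4)(Ĥ₄ − 2iγ₁K + 4γ₂K² + 8iγ₃K³ − 16γ₄K⁴)`. -/
noncomputable def Phi1op (γ₁ γ₂ γ₃ γ₄ : ℂ) : Module.End ℂ V :=
  ((1 : ℂ)/4) • (H4 γ₁ γ₂ γ₃ γ₄ - (2 * Complex.I * γ₁) • Kop + (4 * γ₂) • Kop ^ 2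
    + (8 * Complex.I * γ₃) • Kop ^ 3 - (16 * γ₄) • Kop ^ 4)

/-- `Φ₂(Ĥ₄,K) = Ĥ₄ + 2iγ₁(K − Id) + 4γ₂(K − Id)² − 8iγ₃(K − Id)³ − 16γ₄(K − Id)⁴`. -/
noncomputable def Phi2op (γ₁ γ₂ γ₃ γ₄ : ℂ) : Module.End ℂ V :=
  H4 γ₁ γ₂ γ₃ γ₄ + (2 * Complex.I * γ₁) • (Kop - 1) + (4 * γ₂) • (Kop - 1) ^ 2
    - (8 * Complex.I * γ₃) • (Kop - 1) ^ 3 - (16 * γ₄) • (Kop - 1) ^ 4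


section generic

variable {A : Type*} [Ring A] [Algebra ℂ A]

/-- Two commuting elements come from a commutative algebra. -/
theorem comm_transfer {A : Type} [Ring A] [Algebra ℂ A] (x y : A) (h : x * y = y * x) :
    ∃ (S : Type) (_ : CommRing S) (_ : Algebra ℂ S) (φ : S →ₐ[ℂ] A) (u v : S),
      φ u = x ∧ φ v = y := by
  have hc : ∀ a ∈ ({x, y} : Set A), ∀ b ∈ ({x, y} : Set A), a * b = b * a := by
    rintro a (rfl | rfl) b (rfl | rfl) <;> first | rfl | exact h | exact h.symm
  let _ : CommRing (Algebra.adjoin ℂ ({x, y} : Set A)) := Algebra.adjoinCommRingOfComm ℂ hc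
  refine ⟨Algebra.adjoin ℂ ({x, y} : Set A), inferInstance,
    (Algebra.adjoin ℂ ({x, y} : Set A)).algebra, (Algebra.adjoin ℂ ({x, y} : Set A)).val,
    ⟨x, Algebra.subset_adjoin (by simp)⟩, ⟨y, Algebra.subset_adjoin (by simp)⟩, rfl, rfl⟩

/-- `F(x)=∑ γ_k (-i x)^k`. -/
def Fp (g₁ g₂ g₃ g₄ : ℂ) (x : A) : A :=
  (-Complex.I * g₁) • x - g₂ • x ^ 2 + (Complex.I * g₃) • x ^ 3 + g₄ • x ^ 4

/-- the divided difference -/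
def Gp (g₁ g₂ g₃ g₄ : ℂ) (n m : A) : A :=
  (-Complex.I * g₁) • 1 - (2 * g₂) • m + (Complex.I * g₃) • (3 * m ^ 2 + n ^ 2)
    + (4 * g₄) • (m * (m ^ 2 + n ^ 2))

theorem Gp_mul {A : Type} [Ring A] [Algebra ℂ A] (g₁ g₂ g₃ g₄ : ℂ) (n m : A)
    (h : n * m = m * n) :
    (2 : ℂ) • (Gp g₁ g₂ g₃ g₄ n m * n) = Fp g₁ g₂ g₃ g₄ (n + m) - Fp g₁ g₂ g₃ g₄ (m - n) := by
  obtain ⟨S, _, _, φ, u, v, rfl, rfl⟩ := comm_transfer n m h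
  have : (2 : ℂ) • (Gp g₁ g₂ g₃ g₄ u v * u)
      = Fp g₁ g₂ g₃ g₄ (u + v) - Fp g₁ g₂ g₃ g₄ (v - u) := by
    simp only [Gp, Fp, Algebra.smul_def, map_mul, map_neg, map_ofNat]
    ring
  have h3 : φ 3 = 3 := map_ofNat φ 3
  simpa [Gp, Fp, h3] using congrArg φ this

/-- intertwining for polynomials -/
theorem pow_intertwine {R : Type*} [Ring R] {a x y : R} (h : a * x = y * a) (k : ℕ) :
    a * x ^ k = y ^ k * a := (SemiconjBy.pow_right (show SemiconjBy a x y from h) k).eq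

theorem Fp_intertwine (g₁ g₂ g₃ g₄ : ℂ) {a x y : A} (h : a * x = y * a) :
    a * Fp g₁ g₂ g₃ g₄ x = Fp g₁ g₂ g₃ g₄ y * a := by
  simp only [Fp, mul_add, mul_sub, add_mul, sub_mul, mul_smul_comm, smul_mul_assoc,
    pow_intertwine h, h]

theorem Gp_intertwine (g₁ g₂ g₃ g₄ : ℂ) {a x y x' y' : A} (h : a * x = y * a)
    (h' : a * x' = y' * a) :
    a * Gp g₁ g₂ g₃ g₄ x x' = Gp g₁ g₂ g₃ g₄ y y' * a := by
  have h3 : a * (3 : A) = 3 * a := ((Nat.cast_commute 3 a).eq).symm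
  have e1 : a * (3 * x' ^ 2) = 3 * y' ^ 2 * a := by
    rw [← mul_assoc, h3, mul_assoc, pow_intertwine h', mul_assoc]
  have e2 : a * (x' * (x' ^ 2 + x ^ 2)) = y' * (y' ^ 2 + y ^ 2) * a := by
    rw [← mul_assoc, h', mul_assoc, mul_add, pow_intertwine h', pow_intertwine h, mul_assoc,
      add_mul]
  simp only [Gp, mul_add, mul_sub, add_mul, sub_mul, mul_smul_comm, smul_mul_assoc,
    pow_intertwine h, h', mul_one, one_mul] at e1 e2 ⊢
  rw [e1, e2]

/-- `T₊ = (-2 b + G z) b`. -/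
def Tp (g₁ g₂ g₃ g₄ : ℂ) (z w a b : A) : A :=
  (-(2 : ℂ) • b + Gp g₁ g₂ g₃ g₄ (z * a) (w * b) * z) * b

/-- Hamiltonian -/
def Hp (g₁ g₂ g₃ g₄ : ℂ) (z w a b : A) : A :=
  -(4 : ℂ) • (a * b) + Fp g₁ g₂ g₃ g₄ (z * a + w * b)

theorem Hp_swap (g₁ g₂ g₃ g₄ : ℂ) (z w a b : A) (hab : a * b = b * a) :
    Hp g₁ g₂ g₃ g₄ w z b a = Hp g₁ g₂ g₃ g₄ z w a b := by
  rw [Hp, Hp, hab, add_comm (w * b)]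

theorem Tp_mul_Tp {A : Type} [Ring A] [Algebra ℂ A] (g₁ g₂ g₃ g₄ : ℂ) (z w a b : A)
    (hzw : z * w = w * z) (hab : a * b = b * a)
    (haz : a * z = z * a + 1) (hbw : b * w = w * b + 1) (haw : a * w = w * a)
    (hbz : b * z = z * b) :
    (4 : ℂ) • (Tp g₁ g₂ g₃ g₄ z w a b * Tp g₁ g₂ g₃ g₄ w z b a) =
      (Hp g₁ g₂ g₃ g₄ z w a b - Fp g₁ g₂ g₃ g₄ (w * b - z * a)) *
      (Hp g₁ g₂ g₃ g₄ z w a b - Fp g₁ g₂ g₃ g₄ (z * a - w * b - 2)) := by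
  have hNM : (z * a) * (w * b) = (w * b) * (z * a) := by
    calc (z * a) * (w * b) = z * (a * w) * b := by noncomm_ring
      _ = (z * w) * (a * b) := by rw [haw]; noncomm_ring
      _ = w * (z * b) * a := by rw [hzw, hab]; noncomm_ring
      _ = _ := by rw [← hbz]; noncomm_ring
  have haN : a * (z * a) = (z * a + 1) * a := by rw [← mul_assoc, haz]
  have haM : a * (w * b) = (w * b) * a := by rw [← mul_assoc, haw, mul_assoc, hab, mul_assoc]
  have hbM : b * (w * b) = (w * b + 1) * b := by rw [← mul_assoc, hbw]
  have hbN : b * (z * a) = (z * a) * b := by rw [← mul_assoc, hbz, mul_assoc, ← hab, mul_assoc]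
  -- first factor
  have h1 : (2 : ℂ) • ((-(2 : ℂ) • b + Gp g₁ g₂ g₃ g₄ (z * a) (w * b) * z) * a)
      = Hp g₁ g₂ g₃ g₄ z w a b - Fp g₁ g₂ g₃ g₄ (w * b - z * a) := by
    rw [add_mul, smul_add, mul_assoc, Gp_mul _ _ _ _ _ _ hNM, Hp, smul_mul_assoc, hab]
    module
  have h2 : (2 : ℂ) • (b * (-(2 : ℂ) • a + Gp g₁ g₂ g₃ g₄ (w * b) (z * a) * w))
      = -(4 : ℂ) • (a * b) + (Fp g₁ g₂ g₃ g₄ (z * a + w * b + 1)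
        - Fp g₁ g₂ g₃ g₄ (z * a - w * b - 1)) := by
    have := Gp_mul g₁ g₂ g₃ g₄ (w * b + 1) (z * a) (by rw [add_mul, mul_add, hNM]; simp)
    rw [mul_add, ← mul_assoc b, Gp_intertwine _ _ _ _ hbM hbN, mul_assoc, hbw, smul_add, this,
      mul_smul_comm, hab]
    rw [show w * b + 1 + z * a = z * a + w * b + 1 by abel,
      show z * a - (w * b + 1) = z * a - w * b - 1 by abel]
    module
  have h3 : (2 : ℂ) • (b * Tp g₁ g₂ g₃ g₄ w z b a)
      = a * (Hp g₁ g₂ g₃ g₄ z w a b - Fp g₁ g₂ g₃ g₄ (z * a - w * b - 2)) := by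
    rw [Tp, ← mul_assoc, ← smul_mul_assoc, h2, Hp, mul_sub, mul_add,
      Fp_intertwine g₁ g₂ g₃ g₄ (a := a) (x := z * a + w * b) (y := z * a + w * b + 1)
        (by rw [mul_add, haN, haM]; noncomm_ring),
      Fp_intertwine g₁ g₂ g₃ g₄ (a := a) (x := z * a - w * b - 2) (y := z * a - w * b - 1)
        (by rw [mul_sub, mul_sub, haN, haM]; noncomm_ring)]
    rw [add_mul, sub_mul, mul_smul_comm, smul_mul_assoc, mul_assoc a b a, ← hab]
    abel
  calc _ = ((2 : ℂ) • (-(2 : ℂ) • b + Gp g₁ g₂ g₃ g₄ (z * a) (w * b) * z)) *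
        ((2 : ℂ) • (b * Tp g₁ g₂ g₃ g₄ w z b a)) := by
        rw [Tp]
        simp only [smul_mul_assoc, mul_smul_comm, smul_smul, mul_assoc]
        norm_num
    _ = _ := by rw [h3, ← h1]; simp only [smul_mul_assoc, mul_assoc]

theorem comm_Tp {A : Type} [Ring A] [Algebra ℂ A] (g₁ g₂ g₃ g₄ : ℂ) (z w a b : A)
    (hzw : z * w = w * z) (hab : a * b = b * a)
    (haz : a * z = z * a + 1) (hbw : b * w = w * b + 1) (haw : a * w = w * a)
    (hbz : b * z = z * b) :
    (z * a - w * b) * Tp g₁ g₂ g₃ g₄ z w a b - Tp g₁ g₂ g₃ g₄ z w a b * (z * a - w * b)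
      = (2 : ℂ) • Tp g₁ g₂ g₃ g₄ z w a b := by
  have hNM : (z * a) * (w * b) = (w * b) * (z * a) := by
    calc (z * a) * (w * b) = z * (a * w) * b := by noncomm_ring
      _ = (z * w) * (a * b) := by rw [haw]; noncomm_ring
      _ = w * (z * b) * a := by rw [hzw, hab]; noncomm_ring
      _ = _ := by rw [← hbz]; noncomm_ring
  have hbM : b * (w * b) = (w * b + 1) * b := by rw [← mul_assoc, hbw]
  have hbN : b * (z * a) = (z * a) * b := by rw [← mul_assoc, hbz, mul_assoc, ← hab, mul_assoc]
  have hb : b * (z * a - w * b) = (z * a - w * b - 1) * b := by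
    rw [mul_sub, hbN, hbM]; noncomm_ring
  have hzN : z * (z * a) = (z * a - 1) * z := by
    rw [sub_mul, mul_assoc z a z, haz]; noncomm_ring
  have hzM : z * (w * b) = (w * b) * z := by
    rw [← mul_assoc, hzw, mul_assoc, ← hbz, mul_assoc]
  have hz : z * (z * a - w * b) = (z * a - w * b - 1) * z := by
    rw [mul_sub, hzN, hzM]; noncomm_ring
  have hG : (z * a - w * b) * Gp g₁ g₂ g₃ g₄ (z * a) (w * b) =
      Gp g₁ g₂ g₃ g₄ (z * a) (w * b) * (z * a - w * b) :=
    Gp_intertwine _ _ _ _ (by rw [sub_mul, mul_sub, hNM]) (by rw [sub_mul, mul_sub, hNM])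
  have key : Tp g₁ g₂ g₃ g₄ z w a b * (z * a - w * b)
      = (z * a - w * b - 2) * Tp g₁ g₂ g₃ g₄ z w a b := by
    have e : (-(2 : ℂ) • b + Gp g₁ g₂ g₃ g₄ (z * a) (w * b) * z) * (z * a - w * b)
      = (z * a - w * b - 1) * (-(2 : ℂ) • b + Gp g₁ g₂ g₃ g₄ (z * a) (w * b) * z) := by
      rw [add_mul, mul_add, smul_mul_assoc, mul_smul_comm, hb, mul_assoc, hz, ← mul_assoc,
        ← mul_assoc, mul_sub, ← hG, sub_mul _ 1, mul_one, one_mul, sub_mul _ 1 (Gp _ _ _ _ _ _), one_mul]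
    have e' : (-(2 : ℂ) • b + Gp g₁ g₂ g₃ g₄ (z * a) (w * b) * z) * (z * a - w * b - 1)
      = (z * a - w * b - 2) * (-(2 : ℂ) • b + Gp g₁ g₂ g₃ g₄ (z * a) (w * b) * z) := by
      rw [mul_sub, e]
      generalize (-(2 : ℂ) • b + Gp g₁ g₂ g₃ g₄ (z * a) (w * b) * z) = t
      noncomm_ring
    rw [Tp, mul_assoc, hb, ← mul_assoc, e', mul_assoc]
  rw [key, sub_mul _ (2 : A), sub_sub_cancel, Algebra.smul_def, map_ofNat]

theorem comm_Tp_swap {A : Type} [Ring A] [Algebra ℂ A] (g₁ g₂ g₃ g₄ : ℂ) (z w a b : A)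
    (hzw : z * w = w * z) (hab : a * b = b * a)
    (haz : a * z = z * a + 1) (hbw : b * w = w * b + 1) (haw : a * w = w * a)
    (hbz : b * z = z * b) :
    (z * a - w * b) * Tp g₁ g₂ g₃ g₄ w z b a - Tp g₁ g₂ g₃ g₄ w z b a * (z * a - w * b)
      = -(2 : ℂ) • Tp g₁ g₂ g₃ g₄ w z b a := by
  have h := comm_Tp g₁ g₂ g₃ g₄ w z b a hzw.symm hab.symm hbw haz hbz haw
  rw [neg_smul, ← h]
  noncomm_ring

theorem Hp_comm {A : Type} [Ring A] [Algebra ℂ A] (g₁ g₂ g₃ g₄ : ℂ) (z w a b : A)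
    (hzw : z * w = w * z) (hab : a * b = b * a)
    (haz : a * z = z * a + 1) (hbw : b * w = w * b + 1) (haw : a * w = w * a)
    (hbz : b * z = z * b) :
    Hp g₁ g₂ g₃ g₄ z w a b * (z * a - w * b) = (z * a - w * b) * Hp g₁ g₂ g₃ g₄ z w a b := by
  rw [Hp]
  have hNM : (z * a) * (w * b) = (w * b) * (z * a) := by
    calc (z * a) * (w * b) = z * (a * w) * b := by noncomm_ring
      _ = (z * w) * (a * b) := by rw [haw]; noncomm_ring
      _ = w * (z * b) * a := by rw [hzw, hab]; noncomm_ring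
      _ = _ := by rw [← hbz]; noncomm_ring
  have haN : a * (z * a) = (z * a + 1) * a := by rw [← mul_assoc, haz]
  have haM : a * (w * b) = (w * b) * a := by rw [← mul_assoc, haw, mul_assoc, hab, mul_assoc]
  have hbM : b * (w * b) = (w * b + 1) * b := by rw [← mul_assoc, hbw]
  have hbN : b * (z * a) = (z * a) * b := by rw [← mul_assoc, hbz, mul_assoc, ← hab, mul_assoc]
  have h1 : (z * a - w * b) * (a * b) = a * b * (z * a - w * b) := by
    generalize z * a = N at *
    generalize w * b = M at *
    calc (N - M) * (a * b) = ((N + 1) * a) * b - (M * a) * b - a * b := by noncomm_ring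
      _ = a * (N * b) - a * ((M + 1) * b) := by rw [← haN, ← haM]; noncomm_ring
      _ = _ := by rw [← hbN, ← hbM]; noncomm_ring
  have h2 := Fp_intertwine g₁ g₂ g₃ g₄ (a := z * a - w * b) (x := z * a + w * b)
    (y := z * a + w * b) (by rw [sub_mul, mul_add, mul_add, add_mul, mul_sub, mul_sub, hNM]; abel)
  rw [add_mul, mul_add, h2, smul_mul_assoc, mul_smul_comm, h1]

end generic

/-- `z = q₁ + i q₂` -/
def zz : Module.End ℂ V := q1 + Complex.I • q2
/-- `w = q₁ - i q₂` -/
def ww : Module.End ℂ V := q1 - Complex.I • q2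
/-- `∂_z` -/
def aa : Module.End ℂ V := (Complex.I / 2) • (p1 - Complex.I • p2)
/-- `∂_w` -/
def bb : Module.End ℂ V := (Complex.I / 2) • (p1 + Complex.I • p2)

theorem q12 : q1 * q2 = q2 * q1 := by
  refine LinearMap.ext fun f => ?_
  simp [q1, q2]; ring

theorem p12 : p1 * p2 = p2 * p1 := by
  have h : ⁅(MvPolynomial.pderiv 0 : Derivation ℂ V V), (MvPolynomial.pderiv 1 : Derivation ℂ V V)⁆ = 0 := by
    refine MvPolynomial.derivation_ext fun i => ?_
    fin_cases i <;> simp [Derivation.commutator_apply, MvPolynomial.pderiv_X, Pi.single_apply]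
  refine LinearMap.ext fun f => ?_
  have h' := congrArg (fun d : Derivation ℂ V V => d f) h
  simp only [Derivation.commutator_apply, Derivation.coe_zero, Pi.zero_apply, sub_eq_zero] at h'
  simp [p1, p2, h']

theorem p1q1 : p1 * q1 = q1 * p1 - Complex.I • 1 := by
  refine LinearMap.ext fun f => ?_
  simp [q1, p1]; module

theorem p2q2 : p2 * q2 = q2 * p2 - Complex.I • 1 := by
  refine LinearMap.ext fun f => ?_
  simp [q2, p2]; module

theorem p1q2 : p1 * q2 = q2 * p1 := by
  refine LinearMap.ext fun f => ?_
  simp [q2, p1]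

theorem p2q1 : p2 * q1 = q1 * p2 := by
  refine LinearMap.ext fun f => ?_
  simp [q1, p2]

theorem zw_comm : zz * ww = ww * zz := by
  simp only [zz, ww, add_mul, mul_sub, mul_add, sub_mul, smul_mul_assoc, mul_smul_comm, q12]
  module

theorem ab_comm : aa * bb = bb * aa := by
  simp only [aa, bb, add_mul, mul_sub, mul_add, sub_mul, smul_mul_assoc, mul_smul_comm, p12]
  module

theorem az_comm : aa * zz = zz * aa + 1 := by
  simp only [aa, zz, add_mul, mul_sub, mul_add, sub_mul, smul_mul_assoc, mul_smul_comm,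
    p1q1, p1q2, p2q1, p2q2]
  match_scalars <;> ring_nf <;> simp <;> ring_nf

theorem bw_comm : bb * ww = ww * bb + 1 := by
  simp only [bb, ww, add_mul, mul_sub, mul_add, sub_mul, smul_mul_assoc, mul_smul_comm,
    p1q1, p1q2, p2q1, p2q2]
  match_scalars <;> ring_nf <;> simp <;> ring_nf

theorem aw_comm : aa * ww = ww * aa := by
  simp only [aa, ww, add_mul, mul_sub, mul_add, sub_mul, smul_mul_assoc, mul_smul_comm,
    p1q1, p1q2, p2q1, p2q2]
  match_scalars <;> ring_nf <;> simp

theorem bz_comm : bb * zz = zz * bb := by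
  simp only [bb, zz, add_mul, mul_sub, mul_add, sub_mul, smul_mul_assoc, mul_smul_comm,
    p1q1, p1q2, p2q1, p2q2]
  match_scalars <;> ring_nf <;> simp

theorem C_eq : Cop = zz * aa - ww * bb := by
  simp only [Cop, aa, bb, zz, ww, add_mul, mul_sub, mul_add, sub_mul, smul_mul_assoc,
    mul_smul_comm]
  match_scalars <;> ring_nf <;> simp

theorem D_eq : Dop = -Complex.I • (zz * aa + ww * bb) := by
  simp only [Dop, aa, bb, zz, ww, add_mul, mul_sub, mul_add, sub_mul, smul_mul_assoc,
    mul_smul_comm]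
  match_scalars <;> ring_nf <;> simp

theorem pp_eq : p1 ^ 2 + p2 ^ 2 = -(4 : ℂ) • (aa * bb) := by
  simp only [pow_two, aa, bb, add_mul, mul_sub, mul_add, sub_mul, smul_mul_assoc,
    mul_smul_comm, p12]
  match_scalars <;> ring_nf <;> simp

theorem H_eq (γ₁ γ₂ γ₃ γ₄ : ℂ) : H4 γ₁ γ₂ γ₃ γ₄ = Hp γ₁ γ₂ γ₃ γ₄ zz ww aa bb := by
  rw [H4, pp_eq, D_eq, Hp, Fp]
  simp only [smul_pow, smul_smul]
  have h2 : (-Complex.I) ^ 2 = -1 := by simp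
  have h3 : (-Complex.I) ^ 3 = Complex.I := by rw [pow_succ, h2]; simp
  have h4 : (-Complex.I) ^ 4 = 1 := by rw [pow_succ, h3]; simp
  rw [h2, h3, h4]
  module

theorem p1_eq : p1 = (-Complex.I) • (aa + bb) := by
  simp only [aa, bb]
  match_scalars <;> ring_nf <;> simp

theorem p2_eq : p2 = aa - bb := by
  simp only [aa, bb]
  match_scalars <;> ring_nf <;> simp

theorem q_apply : ∃ Z W : V, (∀ f : V, zz f = 2 * Z * f) ∧ (∀ f : V, ww f = 2 * W * f) ∧
    (∀ f : V, q1 f = (Z + W) * f) ∧ (∀ f : V, q2 f = MvPolynomial.C (-Complex.I) * (Z - W) * f) := by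
  have h2 : (MvPolynomial.C (1 / 2) : V) * 2 = 1 := by
    rw [← map_ofNat (MvPolynomial.C : ℂ →+* V) 2, ← map_mul]; norm_num
  have hI : (MvPolynomial.C Complex.I : V) * MvPolynomial.C Complex.I = -1 := by
    rw [← map_mul, Complex.I_mul_I]; simp
  refine ⟨MvPolynomial.C (1 / 2) * (MvPolynomial.X 0 + MvPolynomial.C Complex.I * MvPolynomial.X 1),
    MvPolynomial.C (1 / 2) * (MvPolynomial.X 0 - MvPolynomial.C Complex.I * MvPolynomial.X 1),
    fun f => ?_, fun f => ?_, fun f => ?_, fun f => ?_⟩ <;>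
  simp only [zz, ww, q1, q2, MvPolynomial.smul_eq_C_mul, LinearMap.add_apply, LinearMap.sub_apply,
    LinearMap.smul_apply, LinearMap.mulLeft_apply, map_neg]
  · linear_combination (-(MvPolynomial.X 0 + MvPolynomial.C Complex.I * MvPolynomial.X 1) * f) * h2
  · linear_combination (-(MvPolynomial.X 0 - MvPolynomial.C Complex.I * MvPolynomial.X 1) * f) * h2
  · linear_combination (-(MvPolynomial.X 0) * f) * h2
  · linear_combination (MvPolynomial.X 1 * f * MvPolynomial.C Complex.I * MvPolynomial.C Complex.I) * h2 + (MvPolynomial.X 1 * f) * hI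

theorem ab_apply (f : V) : aa (bb f) = bb (aa f) := congrArg (fun d => d f) ab_comm

section order
variable {A : Type*} [Ring A]

theorem num_sq {w b : A} (h : b * w = w * b + 1) :
    (w * b) ^ 2 = w ^ 2 * b ^ 2 + w * b := by
  calc (w * b) ^ 2 = w * (b * w) * b := by noncomm_ring
    _ = _ := by rw [h]; noncomm_ring

theorem num_cu {w b : A} (h : b * w = w * b + 1) :
    (w * b) ^ 3 = w ^ 3 * b ^ 3 + 3 * (w ^ 2 * b ^ 2) + w * b := by
  have h2 : b ^ 2 * w = w * b ^ 2 + 2 * b := by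
    calc b ^ 2 * w = b * (b * w) := by noncomm_ring
      _ = (b * w) * b + b := by rw [h, mul_add, ← mul_assoc, h, mul_one]
      _ = _ := by rw [h]; noncomm_ring
  calc (w * b) ^ 3 = (w * b) ^ 2 * (w * b) := by noncomm_ring
    _ = w ^ 2 * (b ^ 2 * w) * b + (w * b) ^ 2 := by 
      nth_rw 1 [num_sq h]
      noncomm_ring
    _ = _ := by rw [h2, num_sq h]; noncomm_ring

/-- normal ordering of the pieces of `G z b` -/
theorem ord1 {z w b : A} (hzw : z * w = w * z) (hbz : b * z = z * b) :
    w * b * z * b = z * w * b ^ 2 := by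
  calc w * b * z * b = w * (b * z) * b := by noncomm_ring
    _ = (w * z) * b ^ 2 := by rw [hbz]; noncomm_ring
    _ = _ := by rw [hzw]

theorem hMz {z w b : A} (hzw : z * w = w * z) (hbz : b * z = z * b) :
    (w * b) * z = z * (w * b) := by
  rw [mul_assoc, hbz, ← mul_assoc, ← hzw, mul_assoc]

theorem hNz {z a : A} (haz : a * z = z * a + 1) : (z * a) * z = z * (z * a + 1) := by
  rw [mul_assoc, haz]

theorem ord2 {z w b : A} (hzw : z * w = w * z) (hbz : b * z = z * b)
    (hbw : b * w = w * b + 1) :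
    (w * b) ^ 2 * z * b = z * w ^ 2 * b ^ 3 + z * w * b ^ 2 := by
  have : (w * b) ^ 2 * z = z * (w * b) ^ 2 := (pow_intertwine (hMz hzw hbz).symm 2).symm
  rw [this, num_sq hbw]; noncomm_ring

theorem ord3 {z a b : A} (haz : a * z = z * a + 1) :
    (z * a) ^ 2 * z * b = z ^ 3 * (a ^ 2 * b) + 3 * (z ^ 2 * (a * b)) + z * b := by
  have : (z * a) ^ 2 * z = z * (z * a + 1) ^ 2 := (pow_intertwine (hNz haz).symm 2).symm
  have e : (z * a + 1) ^ 2 = (z * a) ^ 2 + 2 * (z * a) + 1 := by noncomm_ring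
  rw [this, e, num_sq haz]; noncomm_ring

theorem ord4 {z w b : A} (hzw : z * w = w * z) (hbz : b * z = z * b)
    (hbw : b * w = w * b + 1) :
    (w * b) ^ 3 * z * b = z * w ^ 3 * b ^ 4 + 3 * (z * w ^ 2 * b ^ 3) + z * w * b ^ 2 := by
  have : (w * b) ^ 3 * z = z * (w * b) ^ 3 := (pow_intertwine (hMz hzw hbz).symm 3).symm
  rw [this, num_cu hbw]; noncomm_ring

theorem ord5 {z w a b : A} (hzw : z * w = w * z) (hbz : b * z = z * b)
    (hab : a * b = b * a) (haz : a * z = z * a + 1) :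
    (w * b) * (z * a) ^ 2 * z * b =
      z ^ 3 * w * (a ^ 2 * b ^ 2) + 3 * (z ^ 2 * w * (a * b ^ 2)) + z * w * b ^ 2 := by
  have h1 : (w * b) * z ^ 3 = z ^ 3 * (w * b) := by
    have := (Commute.pow_right (show Commute (w * b) z from hMz hzw hbz) 3).eq
    exact this
  have h2 : (w * b) * z ^ 2 = z ^ 2 * (w * b) := 
    (Commute.pow_right (show Commute (w * b) z from hMz hzw hbz) 2).eq
  have h3 : b * a ^ 2 = a ^ 2 * b := (Commute.pow_right (show Commute b a from hab.symm) 2).eq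
  calc _ = (w * b) * ((z * a) ^ 2 * z * b) := by noncomm_ring
    _ = (w * b) * z ^ 3 * (a ^ 2 * b) + 3 * ((w * b) * z ^ 2 * (a * b)) + (w * b * z) * b := by
      rw [ord3 haz]; noncomm_ring
    _ = z ^ 3 * w * (b * a ^ 2) * b + 3 * (z ^ 2 * w * (b * a) * b) + z * w * b ^ 2 := by
      rw [h1, h2, hMz hzw hbz]; noncomm_ring
    _ = _ := by rw [h3, ← hab]; noncomm_ring

end order

theorem Tp_normal {A : Type} [Ring A] [Algebra ℂ A] (g₁ g₂ g₃ g₄ : ℂ) (z w a b : A)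
    (hzw : z * w = w * z) (hab : a * b = b * a)
    (haz : a * z = z * a + 1) (hbw : b * w = w * b + 1) (hbz : b * z = z * b) :
    Tp g₁ g₂ g₃ g₄ z w a b = -(2 : ℂ) • b ^ 2 + (-Complex.I * g₁) • (z * b)
      - (2 * g₂) • (z * w * b ^ 2)
      + (Complex.I * g₃) • (3 * (z * w ^ 2 * b ^ 3 + z * w * b ^ 2)
          + (z ^ 3 * (a ^ 2 * b) + 3 * (z ^ 2 * (a * b)) + z * b))
      + (4 * g₄) • ((z * w ^ 3 * b ^ 4 + 3 * (z * w ^ 2 * b ^ 3) + z * w * b ^ 2)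
          + (z ^ 3 * w * (a ^ 2 * b ^ 2) + 3 * (z ^ 2 * w * (a * b ^ 2)) + z * w * b ^ 2)) := by
  rw [← ord2 hzw hbz hbw, ← ord3 haz, ← ord4 hzw hbz hbw, ← ord5 hzw hbz hab haz,
    ← ord1 hzw hbz]
  simp only [Tp, Gp, add_mul, sub_mul, smul_mul_assoc, mul_add, one_mul, pow_succ,
    mul_assoc, pow_zero]
  abel

theorem ofNat_apply3 (f : V) : (3 : Module.End ℂ V) f = (3 : ℂ) • f := by
  have : (3 : Module.End ℂ V) = (3 : ℂ) • 1 := by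
    rw [Algebra.smul_def, map_ofNat, mul_one]
  rw [this]; rfl

theorem ofNat_apply4 (f : V) : (4 : Module.End ℂ V) f = (4 : ℂ) • f := by
  have : (4 : Module.End ℂ V) = (4 : ℂ) • 1 := by
    rw [Algebra.smul_def, map_ofNat, mul_one]
  rw [this]; rfl

set_option maxRecDepth 100000 in
set_option maxHeartbeats 4000000 in
theorem K2_eq (γ₁ γ₂ γ₃ γ₄ : ℂ) :
    K2 γ₁ γ₂ γ₃ γ₄ - (γ₂/2 - 2*γ₄) • K1 ^ 2
      = ((1 : ℂ) / 2) • (Tp γ₁ γ₂ γ₃ γ₄ zz ww aa bb + Tp γ₁ γ₂ γ₃ γ₄ ww zz bb aa) := by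
  rw [Tp_normal γ₁ γ₂ γ₃ γ₄ zz ww aa bb zw_comm ab_comm az_comm bw_comm bz_comm,
    Tp_normal γ₁ γ₂ γ₃ γ₄ ww zz bb aa zw_comm.symm ab_comm.symm bw_comm az_comm aw_comm,
    K2, I4, I4', K1]
  generalize Cop = c
  have aux : ∀ x y u : Module.End ℂ V, x - (γ₂ - 4 * γ₄) • y = u →
      ((1 : ℂ) / 2) • x - (γ₂ / 2 - 2 * γ₄) • y = ((1 : ℂ) / 2) • u := by
    intro x y u h
    rw [← h]; module
  apply aux
  refine LinearMap.ext fun f => ?_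
  obtain ⟨Z, W, hZ, hW, hq1, hq2⟩ := q_apply
  have hI : (MvPolynomial.C Complex.I : V) ^ 2 = -1 := by
    rw [← map_pow, Complex.I_sq]; simp
  have hI3 : (MvPolynomial.C Complex.I : V) ^ 3 = -MvPolynomial.C Complex.I := by
    rw [pow_succ, hI]; ring
  have hI4 : (MvPolynomial.C Complex.I : V) ^ 4 = 1 := by
    rw [pow_succ, hI3, neg_mul, ← pow_two, hI]; ring
  have hI5 : (MvPolynomial.C Complex.I : V) ^ 5 = MvPolynomial.C Complex.I := by
    rw [pow_succ, hI4]; ring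
  have hI6 : (MvPolynomial.C Complex.I : V) ^ 6 = -1 := by
    rw [pow_succ, hI5, ← pow_two, hI]
  have hI7 : (MvPolynomial.C Complex.I : V) ^ 7 = -MvPolynomial.C Complex.I := by
    rw [pow_succ, hI6]; ring
  have hI8 : (MvPolynomial.C Complex.I : V) ^ 8 = 1 := by
    rw [pow_succ, hI7, neg_mul, ← pow_two, hI]; ring
  rw [p1_eq, p2_eq]
  simp only [pow_succ, pow_zero, one_mul, Module.End.mul_apply, LinearMap.add_apply,
    LinearMap.sub_apply, LinearMap.smul_apply, map_add, map_sub, map_smul, ofNat_apply3,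
    ofNat_apply4, ab_apply, hZ, hW, hq1, hq2]
  simp only [MvPolynomial.smul_eq_C_mul, map_mul, map_neg, map_ofNat, map_sub]
  generalize (MvPolynomial.C Complex.I : V) = j at *
  ring_nf
  simp only [hI, hI3, hI4, hI5, hI6, hI7, hI8]
  ring

theorem Kplus_minus_eq (γ₁ γ₂ γ₃ γ₄ : ℂ) :
    Kplus γ₁ γ₂ γ₃ γ₄ = Tp γ₁ γ₂ γ₃ γ₄ zz ww aa bb ∧
    Kminus γ₁ γ₂ γ₃ γ₄ = Tp γ₁ γ₂ γ₃ γ₄ ww zz bb aa := by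
  have hp := comm_Tp γ₁ γ₂ γ₃ γ₄ zz ww aa bb zw_comm ab_comm az_comm bw_comm aw_comm bz_comm
  have hm := comm_Tp_swap γ₁ γ₂ γ₃ γ₄ zz ww aa bb zw_comm ab_comm az_comm bw_comm aw_comm
    bz_comm
  have hK := K2_eq γ₁ γ₂ γ₃ γ₄
  rw [← C_eq, ← K1] at hp hm
  rw [Kplus, Kminus, K3]
  generalize Tp γ₁ γ₂ γ₃ γ₄ zz ww aa bb = P at *
  generalize Tp γ₁ γ₂ γ₃ γ₄ ww zz bb aa = M at *
  generalize γ₂/2 - 2*γ₄ = c at *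
  rw [sub_eq_iff_eq_add] at hK
  have h3 : K1 * K2 γ₁ γ₂ γ₃ γ₄ - K2 γ₁ γ₂ γ₃ γ₄ * K1 = P - M := by
    rw [hK]
    have : K1 * (((1 : ℂ) / 2) • (P + M) + c • K1 ^ 2) - (((1 : ℂ) / 2) • (P + M) + c • K1 ^ 2) * K1
      = ((1 : ℂ) / 2) • (K1 * P - P * K1) + ((1 : ℂ) / 2) • (K1 * M - M * K1) := by
      simp only [mul_add, add_mul, smul_mul_assoc, mul_smul_comm, pow_two, mul_assoc]
      module
    rw [this, hp, hm]; module
  rw [h3, hK]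
  constructor <;> module

theorem final_alg {A : Type} [Ring A] [Algebra ℂ A] (γ₁ γ₂ γ₃ γ₄ : ℂ) (H K P M : A)
    (hHK : H * K = K * H)
    (hPM : (4 : ℂ) • (P * M) = (H - Fp γ₁ γ₂ γ₃ γ₄ (-(2 : ℂ) • K)) *
      (H - Fp γ₁ γ₂ γ₃ γ₄ ((2 : ℂ) • (K - 1))))
    (hMP : (4 : ℂ) • (M * P) = (H - Fp γ₁ γ₂ γ₃ γ₄ ((2 : ℂ) • K)) *
      (H - Fp γ₁ γ₂ γ₃ γ₄ (-(2 : ℂ) • (K + 1)))) :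
    M * P - P * M
      = (2 * (γ₁ ^ 2 + 2 * Complex.I * γ₁ * γ₂ - 4 * γ₁ * γ₃
            - 8 * Complex.I * γ₁ * γ₄)) • K
        + (4 * (γ₂ + 3 * Complex.I * γ₃ - 8 * γ₄)) • (H * K)
        + (16 * (γ₂ ^ 2 + 2 * γ₃ ^ 2 - 2 * γ₁ * γ₃ - 6 * Complex.I * γ₁ * γ₄
            + 2 * Complex.I * γ₂ * γ₃ - 8 * γ₂ * γ₄ + 4 * Complex.I * γ₃ * γ₄)) • K ^ 3
        - (32 * γ₄) • (H * K ^ 3)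
        + (32 * (3 * γ₃ ^ 2 + 16 * γ₄ ^ 2 - 6 * γ₂ * γ₄
            + 6 * Complex.I * γ₃ * γ₄)) • K ^ 5
        + (512 * γ₄ ^ 2) • K ^ 7 ∧
    P * M = (((1 : ℂ)/4) • (H - (2 * Complex.I * γ₁) • K + (4 * γ₂) • K ^ 2
    + (8 * Complex.I * γ₃) • K ^ 3 - (16 * γ₄) • K ^ 4)) *
    (H + (2 * Complex.I * γ₁) • (K - 1) + (4 * γ₂) • (K - 1) ^ 2
    - (8 * Complex.I * γ₃) • (K - 1) ^ 3 - (16 * γ₄) • (K - 1) ^ 4) ∧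
    (((1 : ℂ)/4) • (H - (2 * Complex.I * γ₁) • K + (4 * γ₂) • K ^ 2
    + (8 * Complex.I * γ₃) • K ^ 3 - (16 * γ₄) • K ^ 4)) *
    (H + (2 * Complex.I * γ₁) • (K - 1) + (4 * γ₂) • (K - 1) ^ 2
    - (8 * Complex.I * γ₃) • (K - 1) ^ 3 - (16 * γ₄) • (K - 1) ^ 4) -
    (H + (2 * Complex.I * γ₁) • (K - 1) + (4 * γ₂) • (K - 1) ^ 2
    - (8 * Complex.I * γ₃) • (K - 1) ^ 3 - (16 * γ₄) • (K - 1) ^ 4) *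
    (((1 : ℂ)/4) • (H - (2 * Complex.I * γ₁) • K + (4 * γ₂) • K ^ 2
    + (8 * Complex.I * γ₃) • K ^ 3 - (16 * γ₄) • K ^ 4)) = 0 := by
  have hfour : ∀ x y : A, (4 : ℂ) • x = y → x = ((1 : ℂ) / 4) • y := by
    intro x y h
    rw [← h]; module
  have hPM' := hfour _ _ hPM
  have hMP' := hfour _ _ hMP
  rw [hPM', hMP']
  obtain ⟨S, _, _, φ, u, v, rfl, rfl⟩ := comm_transfer H K hHK
  have hj : (algebraMap ℂ S Complex.I) ^ 2 = -1 := by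
    rw [← map_pow, Complex.I_sq]; simp
  have hquarter : ∀ x y : S, x = (4 : ℂ) • y → ((1 : ℂ) / 4) • x = y := by
    intro x y h
    rw [h]; module
  have c1 : ((1 : ℂ) / 4) • ((u - Fp γ₁ γ₂ γ₃ γ₄ ((2 : ℂ) • v)) *
      (u - Fp γ₁ γ₂ γ₃ γ₄ (-(2 : ℂ) • (v + 1)))) -
      ((1 : ℂ) / 4) • ((u - Fp γ₁ γ₂ γ₃ γ₄ (-(2 : ℂ) • v)) *
      (u - Fp γ₁ γ₂ γ₃ γ₄ ((2 : ℂ) • (v - 1)))) =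
      (2 * (γ₁ ^ 2 + 2 * Complex.I * γ₁ * γ₂ - 4 * γ₁ * γ₃
            - 8 * Complex.I * γ₁ * γ₄)) • v
        + (4 * (γ₂ + 3 * Complex.I * γ₃ - 8 * γ₄)) • (u * v)
        + (16 * (γ₂ ^ 2 + 2 * γ₃ ^ 2 - 2 * γ₁ * γ₃ - 6 * Complex.I * γ₁ * γ₄
            + 2 * Complex.I * γ₂ * γ₃ - 8 * γ₂ * γ₄ + 4 * Complex.I * γ₃ * γ₄)) • v ^ 3
        - (32 * γ₄) • (u * v ^ 3)
        + (32 * (3 * γ₃ ^ 2 + 16 * γ₄ ^ 2 - 6 * γ₂ * γ₄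
            + 6 * Complex.I * γ₃ * γ₄)) • v ^ 5
        + (512 * γ₄ ^ 2) • v ^ 7 := by
    rw [← smul_sub]
    apply hquarter
    simp only [Fp, Algebra.smul_def, map_mul, map_neg, map_ofNat, map_add, map_sub, map_pow]
    generalize algebraMap ℂ S Complex.I = j at *
    ring_nf
    simp only [hj]
    ring
  have c2 : ((1 : ℂ) / 4) • ((u - Fp γ₁ γ₂ γ₃ γ₄ (-(2 : ℂ) • v)) *
      (u - Fp γ₁ γ₂ γ₃ γ₄ ((2 : ℂ) • (v - 1)))) =
      (((1 : ℂ)/4) • (u - (2 * Complex.I * γ₁) • v + (4 * γ₂) • v ^ 2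
    + (8 * Complex.I * γ₃) • v ^ 3 - (16 * γ₄) • v ^ 4)) *
    (u + (2 * Complex.I * γ₁) • (v - 1) + (4 * γ₂) • (v - 1) ^ 2
    - (8 * Complex.I * γ₃) • (v - 1) ^ 3 - (16 * γ₄) • (v - 1) ^ 4) := by
    rw [smul_mul_assoc]
    congr 1
    simp only [Fp, Algebra.smul_def, map_mul, map_neg, map_ofNat]
    ring
  have c3 := mul_comm (((1 : ℂ)/4) • (u - (2 * Complex.I * γ₁) • v + (4 * γ₂) • v ^ 2
    + (8 * Complex.I * γ₃) • v ^ 3 - (16 * γ₄) • v ^ 4))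
    (u + (2 * Complex.I * γ₁) • (v - 1) + (4 * γ₂) • (v - 1) ^ 2
    - (8 * Complex.I * γ₃) • (v - 1) ^ 3 - (16 * γ₄) • (v - 1) ^ 4)
  have d1 := congrArg φ c1
  have d2 := congrArg φ c2
  have d3 := congrArg φ c3
  simp only [Fp, map_add, map_sub, map_mul, map_smul, map_pow, map_one] at d1 d2 d3
  exact ⟨d1, d2, sub_eq_zero.mpr d3⟩

theorem H_comm_C (γ₁ γ₂ γ₃ γ₄ : ℂ) : H4 γ₁ γ₂ γ₃ γ₄ * Cop = Cop * H4 γ₁ γ₂ γ₃ γ₄ := by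
  rw [H_eq, C_eq]
  exact Hp_comm γ₁ γ₂ γ₃ γ₄ zz ww aa bb zw_comm ab_comm az_comm bw_comm aw_comm bz_comm

/-- the seventh-order polynomial Higgs algebra generated by
`(K, K₊, K₋)` and the factorization `K₊K₋ = Φ₁Φ₂` with `⁅Φ₁,Φ₂⁆ = 0`. -/
theorem quartic_zernike_higgs_algebra (γ₁ γ₂ γ₃ γ₄ : ℂ) :
    Kop * Kplus γ₁ γ₂ γ₃ γ₄ - Kplus γ₁ γ₂ γ₃ γ₄ * Kop = Kplus γ₁ γ₂ γ₃ γ₄ ∧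
    Kop * Kminus γ₁ γ₂ γ₃ γ₄ - Kminus γ₁ γ₂ γ₃ γ₄ * Kop = -Kminus γ₁ γ₂ γ₃ γ₄ ∧
    Kminus γ₁ γ₂ γ₃ γ₄ * Kplus γ₁ γ₂ γ₃ γ₄ - Kplus γ₁ γ₂ γ₃ γ₄ * Kminus γ₁ γ₂ γ₃ γ₄
      = (2 * (γ₁ ^ 2 + 2 * Complex.I * γ₁ * γ₂ - 4 * γ₁ * γ₃
            - 8 * Complex.I * γ₁ * γ₄)) • Kop
        + (4 * (γ₂ + 3 * Complex.I * γ₃ - 8 * γ₄)) • (H4 γ₁ γ₂ γ₃ γ₄ * Kop)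
        + (16 * (γ₂ ^ 2 + 2 * γ₃ ^ 2 - 2 * γ₁ * γ₃ - 6 * Complex.I * γ₁ * γ₄
            + 2 * Complex.I * γ₂ * γ₃ - 8 * γ₂ * γ₄ + 4 * Complex.I * γ₃ * γ₄)) • Kop ^ 3
        - (32 * γ₄) • (H4 γ₁ γ₂ γ₃ γ₄ * Kop ^ 3)
        + (32 * (3 * γ₃ ^ 2 + 16 * γ₄ ^ 2 - 6 * γ₂ * γ₄
            + 6 * Complex.I * γ₃ * γ₄)) • Kop ^ 5
        + (512 * γ₄ ^ 2) • Kop ^ 7 ∧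
    Kplus γ₁ γ₂ γ₃ γ₄ * Kminus γ₁ γ₂ γ₃ γ₄ = Phi1op γ₁ γ₂ γ₃ γ₄ * Phi2op γ₁ γ₂ γ₃ γ₄ ∧
    Phi1op γ₁ γ₂ γ₃ γ₄ * Phi2op γ₁ γ₂ γ₃ γ₄
      - Phi2op γ₁ γ₂ γ₃ γ₄ * Phi1op γ₁ γ₂ γ₃ γ₄ = 0 := by
  obtain ⟨hP, hM⟩ := Kplus_minus_eq γ₁ γ₂ γ₃ γ₄
  have hp := comm_Tp γ₁ γ₂ γ₃ γ₄ zz ww aa bb zw_comm ab_comm az_comm bw_comm aw_comm bz_comm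
  have hm := comm_Tp_swap γ₁ γ₂ γ₃ γ₄ zz ww aa bb zw_comm ab_comm az_comm bw_comm aw_comm
    bz_comm
  have hpm := Tp_mul_Tp γ₁ γ₂ γ₃ γ₄ zz ww aa bb zw_comm ab_comm az_comm bw_comm aw_comm bz_comm
  have hmp := Tp_mul_Tp γ₁ γ₂ γ₃ γ₄ ww zz bb aa zw_comm.symm ab_comm.symm bw_comm az_comm
    bz_comm aw_comm
  rw [Hp_swap _ _ _ _ _ _ _ _ ab_comm] at hmp
  rw [← neg_sub (zz * aa)] at hpm hmp
  rw [← C_eq, ← hP] at hp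
  rw [← C_eq, ← hM] at hm
  rw [← C_eq, ← hP, ← hM, ← H_eq] at hpm hmp
  have hC : Cop = (2 : ℂ) • Kop := by rw [Kop, K1]; module
  have e2 : (2 : Module.End ℂ V) = (2 : ℂ) • 1 := by
    rw [Algebra.smul_def, map_ofNat, mul_one]
  have hHK : H4 γ₁ γ₂ γ₃ γ₄ * Kop = Kop * H4 γ₁ γ₂ γ₃ γ₄ := by
    rw [Kop, K1, mul_smul_comm, smul_mul_assoc, H_comm_C]
  rw [hC] at hp hm hpm hmp
  rw [show -((2 : ℂ) • Kop) - 2 = -(2 : ℂ) • (Kop + 1) by rw [e2]; module] at hmp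
  rw [show -((2 : ℂ) • Kop) = -(2 : ℂ) • Kop by module,
    show ((2 : ℂ) • Kop) - 2 = (2 : ℂ) • (Kop - 1) by rw [e2]; module] at hpm
  obtain ⟨r1, r2, r3⟩ := final_alg γ₁ γ₂ γ₃ γ₄ _ _ _ _ hHK hpm hmp
  rw [smul_mul_assoc, mul_smul_comm] at hp hm
  refine ⟨?_, ?_, r1, r2, r3⟩
  · have : Kop * Kplus γ₁ γ₂ γ₃ γ₄ - Kplus γ₁ γ₂ γ₃ γ₄ * Kop = ((1 : ℂ) / 2) •
      ((2 : ℂ) • (Kop * Kplus γ₁ γ₂ γ₃ γ₄) - (2 : ℂ) • (Kplus γ₁ γ₂ γ₃ γ₄ * Kop)) := by module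
    rw [this, hp]; module
  · have : Kop * Kminus γ₁ γ₂ γ₃ γ₄ - Kminus γ₁ γ₂ γ₃ γ₄ * Kop = ((1 : ℂ) / 2) •
      ((2 : ℂ) • (Kop * Kminus γ₁ γ₂ γ₃ γ₄) - (2 : ℂ) • (Kminus γ₁ γ₂ γ₃ γ₄ * Kop)) := by
      module
    rw [this, hm]; module
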